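/- Let ρ₀ = √(2/3) and let U ∈ C²([0,ρ₀]) solve (1−ρ²)U''(ρ) + (2/ρ − 4ρ)U'(ρ) − 2U(ρ) + U(ρ)³ = 0 for all ρ ∈ (0,ρ₀), with 0 < U(0) < 2. Then U(ρ) > 0 for all ρ ∈ [0,ρ₀]. -/

import Mathlib

/-!
With `H = (1 - ρ²) U'² / 2 - U² + U⁴ / 4`, the equation gives `H' = (3ρ - 2/ρ) U'²`, so `H` is
nonincreasing on `[0, √(2/3)]`. The singular coefficient `2/ρ` forces `U'(0) = 0`, hence
`H(0) = U(0)² (U(0)² - 4) / 4 < 0`. At a zero of `U` one has `H = (1 - ρ²) U'² / 2 ≥ 0`, so `U` has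
no zero, and positivity follows from the intermediate value theorem.
-/

/-- A `C²` solution of the profile equation on `[0, √(2/3)]` with `0 < U(0) < 2`
stays positive on the whole interval `[0, √(2/3)]`. -/
theorem cubic_wave_positive_up_to_rho0 (U : ℝ → ℝ)
    (hU : ContDiffOn ℝ 2 U (Set.Icc 0 (Real.sqrt (2 / 3))))
    (heq : ∀ ρ ∈ Set.Ioo (0 : ℝ) (Real.sqrt (2 / 3)),
      (1 - ρ ^ 2) * deriv (deriv U) ρ + (2 / ρ - 4 * ρ) * deriv U ρ
        - 2 * U ρ + (U ρ) ^ 3 = 0)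
    (h0 : 0 < U 0) (h2 : U 0 < 2) :
    ∀ ρ ∈ Set.Icc (0 : ℝ) (Real.sqrt (2 / 3)), 0 < U ρ := by
  have hb : 0 < Real.sqrt (2 / 3) := by positivity
  have hb2 : Real.sqrt (2 / 3) ^ 2 = 2 / 3 := Real.sq_sqrt (by norm_num)
  generalize Real.sqrt (2 / 3) = b at *
  have hud : UniqueDiffOn ℝ (Set.Icc 0 b) := uniqueDiffOn_Icc hb
  -- The one-sided derivatives are continuous up to the endpoints, where `deriv U` may be junk.
  set V := derivWithin U (Set.Icc 0 b) with hV
  set W := derivWithin V (Set.Icc 0 b) with hW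
  have hV1 : ContDiffOn ℝ 1 V (Set.Icc 0 b) := hU.derivWithin hud (by norm_num)
  have hUc : ContinuousOn U (Set.Icc 0 b) := hU.continuousOn
  have hVc : ContinuousOn V (Set.Icc 0 b) := hV1.continuousOn
  have hWc : ContinuousOn W (Set.Icc 0 b) := hV1.continuousOn_derivWithin hud le_rfl
  have hUd : ∀ x ∈ Set.Ioo 0 b, HasDerivAt U (V x) x := fun x hx =>
    ((hU.differentiableOn (by norm_num)) x (Set.Ioo_subset_Icc_self hx)).hasDerivWithinAt.hasDerivAt
      (Icc_mem_nhds hx.1 hx.2)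
  have hVd : ∀ x ∈ Set.Ioo 0 b, HasDerivAt V (W x) x := fun x hx =>
    ((hV1.differentiableOn (by norm_num)) x
      (Set.Ioo_subset_Icc_self hx)).hasDerivWithinAt.hasDerivAt (Icc_mem_nhds hx.1 hx.2)
  have hode : ∀ x ∈ Set.Ioo 0 b,
      (1 - x ^ 2) * W x + (2 / x - 4 * x) * V x - 2 * U x + U x ^ 3 = 0 := by
    intro x hx
    have h := heq x hx
    have hVU : deriv U =ᶠ[nhds x] V := by
      filter_upwards [Ioo_mem_nhds hx.1 hx.2] with y hy using (hUd y hy).deriv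
    rwa [hVU.deriv_eq, (hVd x hx).deriv, (hUd x hx).deriv] at h
  have hV0 : V 0 = 0 := by
    -- The equation multiplied by `x` extends continuously to `x = 0`, where it reads `2 V 0 = 0`.
    have hE : Set.EqOn (fun x => x * (1 - x ^ 2) * W x + (2 - 4 * x ^ 2) * V x
        - 2 * x * U x + x * U x ^ 3) (fun _ => 0) (Set.Icc 0 b) := by
      refine Set.EqOn.of_subset_closure (s := Set.Ioo 0 b) ?_ (by fun_prop) (by fun_prop)
        Set.Ioo_subset_Icc_self (closure_Ioo hb.ne).ge
      intro x hx
      have hx0 : x ≠ 0 := hx.1.ne'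
      have h := hode x hx
      field_simp at h
      simp only
      linear_combination h
    have h := hE (Set.left_mem_Icc.2 hb.le)
    simp only at h
    linarith
  have hanti : AntitoneOn (fun x => 1 / 2 * (1 - x ^ 2) * V x ^ 2 - U x ^ 2 + 1 / 4 * U x ^ 4)
      (Set.Icc 0 b) := by
    refine antitoneOn_of_hasDerivWithinAt_nonpos (f' := fun x => (3 * x - 2 / x) * V x ^ 2)
      (convex_Icc 0 b) (by fun_prop) ?_ ?_
    · rw [interior_Icc]
      intro x hx
      have h1 : HasDerivAt (fun x : ℝ => 1 / 2 * (1 - x ^ 2)) (-x) x := by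
        refine (((hasDerivAt_pow 2 x).const_sub 1).const_mul (1 / 2)).congr_deriv ?_
        norm_num
        ring
      refine (((h1.mul ((hVd x hx).pow 2)).sub ((hUd x hx).pow 2)).add
        (((hUd x hx).pow 4).const_mul (1 / 4))).congr_deriv ?_ |>.hasDerivWithinAt
      push_cast
      simp only [Pi.pow_apply]
      linear_combination V x * hode x hx
    · rw [interior_Icc]
      intro x hx
      have h : 3 * x - 2 / x ≤ 0 := by
        rw [sub_nonpos, le_div_iff₀ hx.1]
        nlinarith [hx.1, hx.2]
      exact mul_nonpos_of_nonpos_of_nonneg h (sq_nonneg _)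
  intro x hx
  by_contra! hneg
  obtain ⟨c, hc, hUc0⟩ := intermediate_value_Icc' hx.1
    (hUc.mono (Set.Icc_subset_Icc_right hx.2)) ⟨hneg, h0.le⟩
  have hcb : c ≤ b := hc.2.trans hx.2
  have h := hanti (Set.left_mem_Icc.2 hb.le) ⟨hc.1, hcb⟩ hc.1
  simp only [hV0, hUc0] at h
  have hc2 : 0 ≤ 1 - c ^ 2 := by nlinarith [hc.1]
  have hH : 0 < U 0 ^ 2 * (4 - U 0 ^ 2) := mul_pos (by positivity) (by nlinarith)
  nlinarith [mul_nonneg hc2 (sq_nonneg (V c))]
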